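/- arXiv:1509.02898 — 2 statements merged into one kernel-verified Lean document; each statement's English description precedes it below -/
import Mathlib

section
/- Let k ≥ 3 and e ≥ 2 be integers. In the tensor product R(k,2^e−2) ⊗ R(k,2^e−2) over ZMod 2, the element (z_1·z_2·…·z_{k−2})^{2^{e+1}−1} · z_{k−1}^{2^{e+1}−2} · z_k^{2^e−1} is nonzero, where z_i = x_i ⊗ 1 + 1 ⊗ x_i. -/
/-!
Put `N = 2 ^ e` and `n = N - 2 + k`, write `x₀, …, x_{k-1}` for the generators, numbered from `0`,
and let `x_i`, `y_i` be their images in the two tensor factors, so that the zero-divisors are the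
`x_i + y_i`. Their given product divides the staircase element `∏ x_i ^ (n-1-i) * ∏ y_i ^ (n-1-i)`,
which is nonzero because a staircase monomial is nonzero in each tensor factor.

For the divisibility, multiplying by the partial staircase in `x₀, …, x_{j-1}` kills these
variables and turns the relation in `x₀, …, x_j` into `x_j ^ (n-j) = 0`. Since all binomial
coefficients `C(2 ^ q - 1, i)` are odd, `(x_j + y_j) ^ (2 ^ q - 1)` times a suitable monomial in
`x_j, y_j` then leaves only the top term. This treats one variable at a time, except that the
exponent `2N - 2` is not of this form: the variables `a = x_{k-3}`, `b = x_{k-2}` are treated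
together, through the identities `a ^ N * b ^ N = 0` and `a ^ (N-1) * b ^ N = a ^ N * b ^ (N-1)`
that follow from `h_N(a, b) = 0` and `a ^ (N+1) = 0`.

For the nonvanishing, `h_{n-r}(x₀, …, x_r)` is monic of degree `n - r` in `x_r`, so adjoining roots
one after the other produces an algebra which satisfies the relations and in which the staircase
monomial is nonzero; `R(k, N - 2)` maps to it.
-/

open scoped TensorProduct

/-- Complete homogeneous symmetric polynomial of degree `d` in a list of elements
of a commutative (semi)ring: `h_d(l)`. -/
noncomputable def completeHomog {R : Type*} [CommSemiring R] : List R → ℕ → R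
  | [], 0 => 1
  | [], _ + 1 => 0
  | x :: l, d => ∑ t ∈ Finset.range (d + 1), x ^ t * completeHomog l (d - t)

/-- Elementary symmetric polynomial of degree `d` in a list of elements: `e_d(l)`. -/
noncomputable def elemSymm {R : Type*} [CommSemiring R] : List R → ℕ → R
  | _, 0 => 1
  | [], _ + 1 => 0
  | x :: l, d + 1 => elemSymm l (d + 1) + x * elemSymm l d

/-- The ideal of `(ZMod 2)[x_1, …, x_k]` generated by the complete homogeneous
symmetric polynomials `h_{m+i}(x_1, …, x_{k+1-i})` for `1 ≤ i ≤ k`. -/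
noncomputable def flagIdeal (k m : ℕ) : Ideal (MvPolynomial (Fin k) (ZMod 2)) :=
  Ideal.span { p | ∃ i : ℕ, 1 ≤ i ∧ i ≤ k ∧
    p = completeHomog (((List.finRange k).take (k + 1 - i)).map MvPolynomial.X) (m + i) }

/-- `R(k,m)`, the quotient of `(ZMod 2)[x_1, …, x_k]` by `flagIdeal k m`;
this is the mod-2 cohomology ring of the real flag manifold `F(1^k, m)`. -/
abbrev FlagRing (k m : ℕ) : Type :=
  MvPolynomial (Fin k) (ZMod 2) ⧸ flagIdeal k m

/-- The image of the variable `x_{j+1}` in `R(k,m)` (`j` is 0-indexed). -/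
noncomputable def xGen (k m : ℕ) (j : Fin k) : FlagRing k m :=
  Ideal.Quotient.mk (flagIdeal k m) (MvPolynomial.X j)

/-- The zero-divisor `z_{j+1} = x_{j+1} ⊗ 1 + 1 ⊗ x_{j+1}` in `R(k,m) ⊗ R(k,m)`. -/
noncomputable def zGen (k m : ℕ) (j : Fin k) :
    FlagRing k m ⊗[ZMod 2] FlagRing k m :=
  xGen k m j ⊗ₜ 1 + 1 ⊗ₜ xGen k m j

/-- `x_{i+1,j+1}` in the `s`-fold tensor power `R(k,m)^{⊗ s}`: the element having
`x_{j+1}` in the `(i+1)`-st tensor factor and `1` elsewhere (`i`, `j` 0-indexed). -/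
noncomputable def xT (k m s : ℕ) (i : Fin s) (j : Fin k) :
    ⨂[ZMod 2] _ : Fin s, FlagRing k m :=
  PiTensorProduct.tprod (ZMod 2) (fun t => if t = i then xGen k m j else 1)

/-- The `s`-th zero-divisor `z_{i+1,j+1} = x_{1,j+1} + x_{i+1,j+1}` in `R(k,m)^{⊗ s}`. -/
noncomputable def zT (k m s : ℕ) (hs : 0 < s) (i : Fin s) (j : Fin k) :
    ⨂[ZMod 2] _ : Fin s, FlagRing k m :=
  xT k m s ⟨0, hs⟩ j + xT k m s i j

open Finset Polynomial

/-! ### Complete homogeneous symmetric polynomials -/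

section CompleteHomog

variable {R : Type*} [CommSemiring R]

lemma completeHomog_zero (l : List R) : completeHomog l 0 = 1 := by
  induction l with
  | nil => rw [completeHomog]
  | cons a l ih => simp [completeHomog, ih]

lemma completeHomog_cons_succ (a : R) (l : List R) (d : ℕ) :
    completeHomog (a :: l) (d + 1) = completeHomog l (d + 1) + a * completeHomog (a :: l) d := by
  rw [completeHomog, completeHomog, sum_range_succ', mul_sum, add_comm]
  simp [pow_succ', mul_assoc]

lemma completeHomog_singleton (a : R) (d : ℕ) : completeHomog [a] d = a ^ d := by
  induction d with
  | zero => rw [completeHomog_zero, pow_zero]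
  | succ d ih => rw [completeHomog_cons_succ, ih, completeHomog, zero_add, pow_succ']

lemma completeHomog_swap (a b : R) (l : List R) (d : ℕ) :
    completeHomog (a :: b :: l) d = completeHomog (b :: a :: l) d := by
  simp only [completeHomog, mul_sum]
  rw [sum_comm' (t' := range (d + 1)) (s' := fun t ↦ range (d - t + 1))
    (by simp only [mem_range]; omega)]
  refine sum_congr rfl fun s _ ↦ sum_congr rfl fun t _ ↦ ?_
  rw [mul_left_comm, Nat.sub_right_comm]

lemma completeHomog_perm {l l' : List R} (h : l.Perm l') (d : ℕ) :
    completeHomog l d = completeHomog l' d := by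
  induction h generalizing d with
  | nil => rfl
  | cons a _ ih => simp only [completeHomog, ih]
  | swap a b l => exact completeHomog_swap b a l d
  | trans _ _ ih₁ ih₂ => rw [ih₁, ih₂]

lemma map_completeHomog {S : Type*} [CommSemiring S] (f : R →+* S) (l : List R) (d : ℕ) :
    f (completeHomog l d) = completeHomog (l.map f) d := by
  induction l generalizing d with
  | nil => cases d <;> simp [completeHomog]
  | cons a l ih => simp [completeHomog, ih]

lemma sub_mul_completeHomog_pair {R : Type*} [CommRing R] (a b : R) (d : ℕ) :
    (a - b) * completeHomog [a, b] d = a ^ (d + 1) - b ^ (d + 1) := by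
  induction d with
  | zero => simp [completeHomog_zero]
  | succ d ih =>
    rw [completeHomog_cons_succ, completeHomog_singleton]
    linear_combination a * ih

lemma mul_completeHomog_cons {u a : R} (h : u * a = 0) (l : List R) (d : ℕ) :
    u * completeHomog (a :: l) d = u * completeHomog l d := by
  cases d with
  | zero => rw [completeHomog_zero, completeHomog_zero]
  | succ d => rw [completeHomog_cons_succ, mul_add, ← mul_assoc, h, zero_mul, add_zero]

lemma mul_completeHomog_append {u : R} {l : List R} (h : ∀ a ∈ l, u * a = 0) (l' : List R)
    (d : ℕ) : u * completeHomog (l ++ l') d = u * completeHomog l' d := by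
  induction l with
  | nil => rfl
  | cons a l ih =>
    rw [List.forall_mem_cons] at h
    rw [List.cons_append, mul_completeHomog_cons h.1, ih h.2]

lemma isMonicOfDegree_completeHomog_X_cons [Nontrivial R] (l : List R) (d : ℕ) :
    IsMonicOfDegree (completeHomog ((X : R[X]) :: l.map C) d) d := by
  induction d with
  | zero => simp [completeHomog_zero]
  | succ d ih =>
    rw [completeHomog_cons_succ, ← map_completeHomog, add_comm, add_comm d]
    exact ((isMonicOfDegree_X R).mul ih).add_right (by simp)

end CompleteHomog

section TwoVariables

variable {R : Type*} {u a b : R} {d : ℕ}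

lemma mul_pow_mul_pow_eq_zero [CommSemiring R] (ha : u * a ^ (d + 1) = 0)
    (h : u * completeHomog [a, b] d = 0) : u * (a ^ d * b ^ d) = 0 := by
  have hkill : u * a ^ d * a = 0 := by rw [mul_assoc, ← pow_succ, ha]
  calc u * (a ^ d * b ^ d) = u * a ^ d * completeHomog [a, b] d := by
        rw [mul_completeHomog_cons hkill, completeHomog_singleton, mul_assoc]
    _ = a ^ d * (u * completeHomog [a, b] d) := by ring
    _ = 0 := by rw [h, mul_zero]

lemma mul_pow_mul_pow_succ_add_eq_zero [CommSemiring R] (ha : u * a ^ (d + 2) = 0)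
    (h : u * completeHomog [a, b] (d + 1) = 0) :
    u * (a ^ d * b ^ (d + 1)) + u * (a ^ (d + 1) * b ^ d) = 0 := by
  have hkill : u * a ^ (d + 1) * a = 0 := by rw [mul_assoc, ← pow_succ, ha]
  calc u * (a ^ d * b ^ (d + 1)) + u * (a ^ (d + 1) * b ^ d)
      = u * (a ^ d * b ^ (d + 1)) + u * a ^ (d + 1) * completeHomog [a, b] d := by
        rw [mul_completeHomog_cons hkill, completeHomog_singleton, ← mul_assoc u (a ^ (d + 1))]
    _ = a ^ d * (u * completeHomog [a, b] (d + 1)) := by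
        rw [completeHomog_cons_succ, completeHomog_singleton]; ring
    _ = 0 := by rw [h, mul_zero]

lemma mul_pow_succ_eq_zero [CommRing R] (ha : u * a ^ (d + 1) = 0)
    (h : u * completeHomog [a, b] d = 0) : u * b ^ (d + 1) = 0 := by
  linear_combination ha - (a - b) * h + u * sub_mul_completeHomog_pair a b d

end TwoVariables

/-! ### Powers of sums in characteristic two -/

section CharTwo

variable {R : Type*} [CommSemiring R] [CharP R 2] {u x y : R}

lemma add_pow_two_pow_sub_one (x y : R) (q : ℕ) :
    (x + y) ^ (2 ^ q - 1) = ∑ i ∈ range (2 ^ q), x ^ i * y ^ (2 ^ q - 1 - i) := by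
  induction q with
  | zero => simp
  | succ q ih =>
    have hq : 0 < 2 ^ q := by positivity
    rw [show 2 ^ (q + 1) - 1 = 2 ^ q + (2 ^ q - 1) by omega, pow_add, add_pow_char_pow, ih,
      pow_succ, mul_two, sum_range_add, add_comm (x ^ 2 ^ q), add_mul, mul_sum, mul_sum]
    congr 1 <;> refine sum_congr rfl fun i hi ↦ ?_
    · rw [mem_range] at hi
      rw [show 2 ^ q + (2 ^ q - 1) - i = 2 ^ q + (2 ^ q - 1 - i) by omega, pow_add]
      ring
    · rw [show 2 ^ q + (2 ^ q - 1) - (2 ^ q + i) = 2 ^ q - 1 - i by omega, pow_add]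
      ring

lemma mul_add_pow_eq_mul_pow_mul_pow {q c d : ℕ} (hcd : c + d + 1 = 2 ^ q)
    (hx : u * x ^ (c + 1) = 0) (hy : u * y ^ (d + 1) = 0) :
    u * (x + y) ^ (c + d) = u * (x ^ c * y ^ d) := by
  have hx' {i : ℕ} (hi : c + 1 ≤ i) : u * x ^ i = 0 := by
    rw [← Nat.add_sub_cancel' hi, pow_add, ← mul_assoc, hx, zero_mul]
  have hy' {i : ℕ} (hi : d + 1 ≤ i) : u * y ^ i = 0 := by
    rw [← Nat.add_sub_cancel' hi, pow_add, ← mul_assoc, hy, zero_mul]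
  rw [show c + d = 2 ^ q - 1 by omega, add_pow_two_pow_sub_one, mul_sum,
    sum_eq_single_of_mem c (mem_range.2 (by omega)), show 2 ^ q - 1 - c = d by omega]
  intro i hi hne
  rw [mem_range] at hi
  rcases hne.lt_or_gt with hlt | hgt
  · rw [mul_left_comm, hy' (by omega), mul_zero]
  · rw [← mul_assoc, hx' hgt, zero_mul]

lemma mul_add_pow_dvd_mul_pow_mul_pow {q s t : ℕ} (hst : 2 ^ q ≤ s + t + 1)
    (hx : u * x ^ (s + 1) = 0) (hy : u * y ^ (t + 1) = 0) :
    u * (x + y) ^ (2 ^ q - 1) ∣ u * (x ^ s * y ^ t) := by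
  obtain ⟨c, d, i, j, rfl, rfl, hcd⟩ : ∃ c d i j, s = i + c ∧ t = j + d ∧ c + d + 1 = 2 ^ q := by
    have hq : 0 < 2 ^ q := by positivity
    let c := min s (2 ^ q - 1)
    exact ⟨c, 2 ^ q - 1 - c, s - c, t - (2 ^ q - 1 - c), by omega, by omega, by omega⟩
  have htop : u * (x ^ i * y ^ j) * (x + y) ^ (c + d) = u * (x ^ i * y ^ j) * (x ^ c * y ^ d) := by
    apply mul_add_pow_eq_mul_pow_mul_pow hcd
    · calc _ = u * x ^ (i + c + 1) * y ^ j := by ring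
        _ = 0 := by rw [hx, zero_mul]
    · calc _ = u * y ^ (j + d + 1) * x ^ i := by ring
        _ = 0 := by rw [hy, zero_mul]
  refine ⟨x ^ i * y ^ j, ?_⟩
  rw [show 2 ^ q - 1 = c + d by omega]
  calc u * (x ^ (i + c) * y ^ (j + d)) = u * (x ^ i * y ^ j) * (x ^ c * y ^ d) := by ring
    _ = u * (x + y) ^ (c + d) * (x ^ i * y ^ j) := by rw [← htop]; ring

lemma mul_mul_add_pow_two_mul {e d : ℕ} (he : e ≠ 0) (hd : d + 1 = 2 ^ e)
    (hx : u * x ^ (d + 2) = 0) (hy : u * y ^ (d + 2) = 0) :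
    u * y * (x + y) ^ (2 * d) = u * (x ^ (d + 1) * y ^ d) := by
  obtain ⟨h, rfl⟩ : ∃ h, d = 2 * h + 1 := by
    have : Even (d + 1) := hd ▸ (even_two.pow_of_ne_zero he)
    obtain ⟨r, hr⟩ := this
    exact ⟨r - 1, by omega⟩
  calc u * y * (x + y) ^ (2 * (2 * h + 1)) = u * y * (x ^ 2 + y ^ 2) ^ (h + 1 + h) := by
        rw [pow_mul, CharTwo.add_sq]; congr 2; ring
    _ = u * y * ((x ^ 2) ^ (h + 1) * (y ^ 2) ^ h) := by
        apply mul_add_pow_eq_mul_pow_mul_pow (q := e) (by omega)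
        · calc _ = u * x ^ (2 * h + 1 + 2) * (x * y) := by ring
            _ = 0 := by rw [hx, zero_mul]
        · calc _ = u * y ^ (2 * h + 1 + 2) := by ring
            _ = 0 := hy
    _ = u * (x ^ (2 * h + 1 + 1) * y ^ (2 * h + 1)) := by ring

/- The extra factor on the left breaks the symmetry of the even power, leaving only a term that
contains `b ^ (d + 1)`. That term kills `a ^ (d + 1)`, so the odd power contributes its term with
`a ^ d`; the relation between `a` and `b` then exchanges the exponents of `a ^ d * b ^ (d + 1)`. -/
lemma mul_add_pow_mul_add_pow_mul {R : Type*} [CommRing R] [CharP R 2] {u a b a' b' : R}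
    {e d : ℕ} (he : e ≠ 0) (hd : d + 1 = 2 ^ e)
    (ha : u * a ^ (d + 2) = 0) (hab : u * completeHomog [a, b] (d + 1) = 0)
    (ha' : u * a' ^ (d + 2) = 0) (hab' : u * completeHomog [a', b'] (d + 1) = 0) :
    u * (a + a') ^ (2 * d + 1) * (b + b') ^ (2 * d) * b' =
      u * (a ^ (d + 1) * a' ^ (d + 1)) * (b ^ d * b' ^ d) := by
  have hbb : u * b' * (b + b') ^ (2 * d) = u * (b ^ (d + 1) * b' ^ d) :=
    mul_mul_add_pow_two_mul he hd (mul_pow_succ_eq_zero ha hab) (mul_pow_succ_eq_zero ha' hab')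
  have haa : u * (b ^ (d + 1) * b' ^ d) * (a + a') ^ (d + (d + 1)) =
      u * (b ^ (d + 1) * b' ^ d) * (a ^ d * a' ^ (d + 1)) := by
    apply mul_add_pow_eq_mul_pow_mul_pow (q := e + 1) (by omega)
    · linear_combination b' ^ d * mul_pow_mul_pow_eq_zero ha hab
    · linear_combination b ^ (d + 1) * b' ^ d * ha'
  have hswap : u * (a ^ d * b ^ (d + 1)) = u * (a ^ (d + 1) * b ^ d) :=
    CharTwo.add_eq_zero.1 (mul_pow_mul_pow_succ_add_eq_zero ha hab)
  calc u * (a + a') ^ (2 * d + 1) * (b + b') ^ (2 * d) * b'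
      = u * b' * (b + b') ^ (2 * d) * (a + a') ^ (d + (d + 1)) := by ring
    _ = u * (b ^ (d + 1) * b' ^ d) * (a ^ d * a' ^ (d + 1)) := by rw [hbb, haa]
    _ = u * (a ^ d * b ^ (d + 1)) * (a' ^ (d + 1) * b' ^ d) := by ring
    _ = u * (a ^ (d + 1) * a' ^ (d + 1)) * (b ^ d * b' ^ d) := by rw [hswap]; ring

end CharTwo

/-! ### Flag relations and staircase monomials -/

/-- The defining relations `h_{n-r}(x_0, …, x_r) = 0`, `r < k`, of `R(k, n - k)`, imposed on the
first `k` terms of a sequence. Compared with `flagIdeal`, the relation of index `i` is the one with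
`r = k - i`. -/
def FlagRelations {R : Type*} [CommSemiring R] (x : ℕ → R) (k n : ℕ) : Prop :=
  ∀ r < k, completeHomog ((List.range (r + 1)).map x) (n - r) = 0

/-- The partial staircase monomial `x_0 ^ (n-1) * x_1 ^ (n-2) * ⋯ * x_{j-1} ^ (n-j)`. For
`n = m + k` and `j = k` it represents the top class of `R(k, m)`. -/
def staircase {R : Type*} [CommMonoid R] (x : ℕ → R) (n j : ℕ) : R :=
  ∏ i ∈ range j, x i ^ (n - 1 - i)

lemma staircase_succ {R : Type*} [CommMonoid R] (x : ℕ → R) (n j : ℕ) :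
    staircase x n (j + 1) = staircase x n j * x j ^ (n - 1 - j) :=
  prod_range_succ _ _

lemma map_staircase {R S F : Type*} [CommMonoid R] [CommMonoid S] [FunLike F R S]
    [MonoidHomClass F R S] (f : F) (x : ℕ → R) (n j : ℕ) :
    f (staircase x n j) = staircase (fun i ↦ f (x i)) n j := by
  simp only [staircase, map_prod, map_pow]

lemma staircase_congr {R : Type*} [CommMonoid R] {x y : ℕ → R} {n j : ℕ}
    (h : ∀ i < j, x i = y i) : staircase x n j = staircase y n j :=
  prod_congr rfl fun i hi ↦ by rw [h i (mem_range.1 hi)]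

namespace FlagRelations

section CommSemiring

variable {R : Type*} [CommSemiring R] {x : ℕ → R} {k n j : ℕ}

lemma map {S : Type*} [CommSemiring S] (f : R →+* S) (hx : FlagRelations x k n) :
    FlagRelations (fun i ↦ f (x i)) k n := by
  intro r hr
  rw [← Function.comp_def, ← List.map_map, ← map_completeHomog, hx r hr, map_zero]

lemma congr {y : ℕ → R} (h : ∀ i < k, x i = y i) (hx : FlagRelations x k n) :
    FlagRelations y k n := by
  intro r hr
  rw [← hx r hr, List.map_congr_left fun i hi ↦ h i (by rw [List.mem_range] at hi; omega)]

lemma mul_completeHomog_range' (hx : FlagRelations x k n) {u : R} (hu : ∀ i < j, u * x i = 0)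
    {r : ℕ} (hr : j + r < k) :
    u * completeHomog ((List.range' j (r + 1)).map x) (n - (j + r)) = 0 := by
  have hu' : ∀ a ∈ (List.range j).map x, u * a = 0 :=
    List.forall_mem_map.2 fun i hi ↦ hu i (List.mem_range.1 hi)
  have hsplit : (List.range (j + r + 1)).map x =
      (List.range j).map x ++ (List.range' j (r + 1)).map x := by
    have happend := List.range'_append_1 (s := 0) (m := j) (n := r + 1)
    rw [zero_add, ← add_assoc] at happend
    rw [List.range_eq_range', List.range_eq_range', ← List.map_append, happend]
  rw [← mul_completeHomog_append hu', ← hsplit, hx _ hr, mul_zero]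

lemma staircase_mul_eq_zero (hx : FlagRelations x k n) (hkn : k ≤ n) (hj : j ≤ k) :
    ∀ i < j, staircase x n j * x i = 0 := by
  induction j with
  | zero => simp
  | succ j ih =>
    have hkill := ih (by omega)
    intro i hi
    rw [staircase_succ]
    rcases Nat.lt_succ_iff_lt_or_eq.1 hi with hlt | rfl
    · rw [mul_right_comm, hkill i hlt, zero_mul]
    · have hpow := hx.mul_completeHomog_range' hkill (r := 0) (by omega)
      rw [mul_assoc, ← pow_succ, show n - 1 - i + 1 = n - i by omega]
      simpa [completeHomog_singleton] using hpow

lemma staircase_mul_pow_eq_zero (hx : FlagRelations x k n) (hkn : k ≤ n) (hj : j < k) :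
    staircase x n j * x j ^ (n - j) = 0 := by
  have hrel := hx.mul_completeHomog_range' (hx.staircase_mul_eq_zero hkn hj.le) (r := 0) hj
  simpa [completeHomog_singleton] using hrel

lemma staircase_mul_completeHomog_pair_eq_zero (hx : FlagRelations x k n) (hkn : k ≤ n)
    (hj : j + 1 < k) :
    staircase x n j * completeHomog [x j, x (j + 1)] (n - (j + 1)) = 0 :=
  hx.mul_completeHomog_range' (hx.staircase_mul_eq_zero hkn (by omega)) hj

end CommSemiring

section Divisibility

variable {R : Type*} [CommRing R] [CharP R 2] {x y : ℕ → R} {k n j : ℕ}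

lemma staircase_mul_staircase_mul_add_pow_dvd (hx : FlagRelations x k n)
    (hy : FlagRelations y k n) (hkn : k ≤ n) (hj : j < k) {q : ℕ} (hq : 2 ^ q < 2 * (n - j)) :
    staircase x n j * staircase y n j * (x j + y j) ^ (2 ^ q - 1) ∣
      staircase x n (j + 1) * staircase y n (j + 1) := by
  have hpow : n - 1 - j + 1 = n - j := by omega
  rw [staircase_succ, staircase_succ, mul_mul_mul_comm]
  apply mul_add_pow_dvd_mul_pow_mul_pow (by omega)
  · rw [hpow, mul_right_comm, hx.staircase_mul_pow_eq_zero hkn hj, zero_mul]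
  · rw [hpow, mul_assoc, hy.staircase_mul_pow_eq_zero hkn hj, mul_zero]

lemma prod_add_pow_dvd (hx : FlagRelations x k n) (hy : FlagRelations y k n) (hkn : k ≤ n)
    (hj : j ≤ k) {q : ℕ} (hq : ∀ i < j, 2 ^ q < 2 * (n - i)) :
    (∏ i ∈ range j, (x i + y i)) ^ (2 ^ q - 1) ∣ staircase x n j * staircase y n j := by
  induction j with
  | zero => simp
  | succ j ih =>
    rw [prod_range_succ, mul_pow]
    exact (mul_dvd_mul_right (ih (by omega) fun i hi ↦ hq i (by omega)) _).trans
      (staircase_mul_staircase_mul_add_pow_dvd hx hy hkn hj (hq j (by omega)))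

lemma staircase_mul_staircase_mul_add_pow_mul_add_pow_dvd {e : ℕ} (he : e ≠ 0)
    (hn : n = 2 ^ e + j + 1) (hx : FlagRelations x k n) (hy : FlagRelations y k n) (hkn : k ≤ n)
    (hj : j + 1 < k) :
    staircase x n j * staircase y n j * (x j + y j) ^ (2 ^ (e + 1) - 1) *
        (x (j + 1) + y (j + 1)) ^ (2 ^ (e + 1) - 2) ∣
      staircase x n (j + 2) * staircase y n (j + 2) := by
  obtain ⟨d, hd⟩ : ∃ d, d + 1 = 2 ^ e := ⟨2 ^ e - 1, by have := Nat.two_pow_pos e; omega⟩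
  have hxa := hx.staircase_mul_pow_eq_zero hkn (j := j) (by omega)
  have hya := hy.staircase_mul_pow_eq_zero hkn (j := j) (by omega)
  have hxab := hx.staircase_mul_completeHomog_pair_eq_zero hkn hj
  have hyab := hy.staircase_mul_completeHomog_pair_eq_zero hkn hj
  rw [show n - j = d + 2 by omega] at hxa hya
  rw [show n - (j + 1) = d + 1 by omega] at hxab hyab
  have htop := mul_add_pow_mul_add_pow_mul (u := staircase x n j * staircase y n j)
    (a := x j) (b := x (j + 1)) (a' := y j) (b' := y (j + 1)) he hd
    (by linear_combination staircase y n j * hxa) (by linear_combination staircase y n j * hxab)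
    (by linear_combination staircase x n j * hya) (by linear_combination staircase x n j * hyab)
  refine ⟨y (j + 1), ?_⟩
  rw [show 2 ^ (e + 1) - 1 = 2 * d + 1 by omega, show 2 ^ (e + 1) - 2 = 2 * d by omega, htop]
  simp only [staircase_succ, show n - 1 - j = d + 1 by omega, show n - 1 - (j + 1) = d by omega]
  ring

theorem prod_add_pow_mul_add_pow_mul_add_pow_dvd {p e : ℕ} (he : 2 ≤ e)
    (hx : FlagRelations x (p + 3) (2 ^ e + p + 1)) (hy : FlagRelations y (p + 3) (2 ^ e + p + 1)) :
    (∏ i ∈ range (p + 1), (x i + y i)) ^ (2 ^ (e + 1) - 1) *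
        (x (p + 1) + y (p + 1)) ^ (2 ^ (e + 1) - 2) * (x (p + 2) + y (p + 2)) ^ (2 ^ e - 1) ∣
      staircase x (2 ^ e + p + 1) (p + 3) * staircase y (2 ^ e + p + 1) (p + 3) := by
  have hpow : 2 ^ 2 ≤ 2 ^ e := Nat.pow_le_pow_right two_pos he
  have hkn : p + 3 ≤ 2 ^ e + p + 1 := by omega
  have hfirst := prod_add_pow_dvd hx hy hkn (j := p) (q := e + 1) (by omega) (by omega)
  have hmiddle := staircase_mul_staircase_mul_add_pow_mul_add_pow_dvd (by omega) rfl hx hy hkn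
    (by omega)
  have hlast := staircase_mul_staircase_mul_add_pow_dvd hx hy hkn (j := p + 2) (q := e) (by omega)
    (by omega)
  rw [prod_range_succ, mul_pow]
  exact (mul_dvd_mul_right ((mul_dvd_mul_right (mul_dvd_mul_right hfirst _) _).trans hmiddle)
    _).trans hlast

end Divisibility

theorem prod_tmul_add_tmul_ne_zero {K R : Type*} [Field K] [CharP K 2] [CommRing R] [Algebra K R]
    {x : ℕ → R} {p e : ℕ} (he : 2 ≤ e) (hx : FlagRelations x (p + 3) (2 ^ e + p + 1))
    (htop : staircase x (2 ^ e + p + 1) (p + 3) ≠ 0) :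
    (∏ i ∈ range (p + 1), (x i ⊗ₜ[K] 1 + 1 ⊗ₜ x i)) ^ (2 ^ (e + 1) - 1) *
        (x (p + 1) ⊗ₜ[K] 1 + 1 ⊗ₜ x (p + 1)) ^ (2 ^ (e + 1) - 2) *
        (x (p + 2) ⊗ₜ[K] 1 + 1 ⊗ₜ x (p + 2)) ^ (2 ^ e - 1) ≠ 0 := by
  let ι₁ : R →ₐ[K] R ⊗[K] R := Algebra.TensorProduct.includeLeft
  let ι₂ : R →ₐ[K] R ⊗[K] R := Algebra.TensorProduct.includeRight
  set w := staircase x (2 ^ e + p + 1) (p + 3) with hw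
  have hne : ι₁ w * ι₂ w ≠ 0 := by
    have hli : LinearIndependent K fun _ : Unit ↦ w := .of_subsingleton () htop
    simpa [ι₁, ι₂] using (hli.tmul_of_isDomain hli).ne_zero ((), ())
  have := nontrivial_of_ne _ _ hne
  have : CharP (R ⊗[K] R) 2 := charP_of_injective_algebraMap' K 2
  have hdvd := prod_add_pow_mul_add_pow_mul_add_pow_dvd he (hx.map (ι₁ : R →+* R ⊗[K] R))
    (hx.map (ι₂ : R →+* R ⊗[K] R))
  rw [← map_staircase, ← map_staircase, ← hw] at hdvd
  exact ne_zero_of_dvd_ne_zero hne hdvd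

end FlagRelations

/-! ### Nonvanishing of the staircase monomial -/

section Nonvanishing

universe u

lemma adjoinRoot_of_mul_root_pow_ne_zero {R : Type*} [CommRing R] [Nontrivial R] {f : R[X]}
    {d i : ℕ} (hf : IsMonicOfDegree f d) (hi : i < d) {a : R} (ha : a ≠ 0) :
    AdjoinRoot.of f a * AdjoinRoot.root f ^ i ≠ 0 := by
  have hdeg : (C a * X ^ i).natDegree = i := natDegree_C_mul_X_pow i a ha
  have hne : C a * X ^ i ≠ 0 := by rwa [C_mul_X_pow_eq_monomial, Ne, monomial_eq_zero_iff]
  rw [← AdjoinRoot.mk_C, ← AdjoinRoot.mk_X, ← map_pow, ← map_mul, Ne, AdjoinRoot.mk_eq_zero]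
  exact hf.monic.not_dvd_of_natDegree_lt hne (by rwa [hdeg, hf.natDegree_eq])

lemma FlagRelations.exists_succ {R : Type u} [CommRing R] {x : ℕ → R} {k n : ℕ} (hkn : k < n)
    (hx : FlagRelations x k n) (htop : staircase x n k ≠ 0) :
    ∃ (S : Type u) (_ : CommRing S) (_ : Algebra R S) (y : ℕ → S),
      FlagRelations y (k + 1) n ∧ staircase y n (k + 1) ≠ 0 := by
  have := nontrivial_of_ne _ _ htop
  let l := (List.range k).map x
  let f : R[X] := completeHomog (X :: l.map C) (n - k)
  have hf : IsMonicOfDegree f (n - k) := isMonicOfDegree_completeHomog_X_cons l (n - k)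
  let y : ℕ → AdjoinRoot f := fun i ↦ if i < k then AdjoinRoot.of f (x i) else AdjoinRoot.root f
  have hy : ∀ i < k, AdjoinRoot.of f (x i) = y i := fun i hi ↦ (if_pos hi).symm
  have hyk : y k = AdjoinRoot.root f := if_neg (lt_irrefl k)
  refine ⟨AdjoinRoot f, inferInstance, inferInstance, y, ?_, ?_⟩
  · refine Nat.forall_lt_succ_right.2 ⟨(hx.map (AdjoinRoot.of f)).congr hy, ?_⟩
    have hl : (List.range k).map y = (l.map C).map (AdjoinRoot.mk f) := by
      simp only [l, List.map_map]
      exact List.map_congr_left fun i hi ↦ (hy i (List.mem_range.1 hi)).symm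
    rw [List.range_succ, List.map_append, List.map_singleton, hl, hyk, ← AdjoinRoot.mk_X,
      completeHomog_perm (List.perm_append_singleton _ _), ← List.map_cons, ← map_completeHomog]
    exact AdjoinRoot.mk_self
  · rw [staircase_succ, ← staircase_congr hy, ← map_staircase, hyk]
    exact adjoinRoot_of_mul_root_pow_ne_zero hf (by omega) htop

theorem exists_flagRelations_staircase_ne_zero (A : Type u) [CommRing A] [Nontrivial A] {k n : ℕ}
    (hkn : k ≤ n) :
    ∃ (S : Type u) (_ : CommRing S) (_ : Algebra A S) (x : ℕ → S),
      FlagRelations x k n ∧ staircase x n k ≠ 0 := by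
  induction k with
  | zero => exact ⟨A, inferInstance, inferInstance, 0, by simp [FlagRelations], by simp [staircase]⟩
  | succ k ih =>
    obtain ⟨S, _, _, x, hx, htop⟩ := ih (by omega)
    obtain ⟨T, _, _, y, hy, htop'⟩ := hx.exists_succ hkn htop
    exact ⟨T, inferInstance, Algebra.compHom T (algebraMap A S), y, hy, htop'⟩

end Nonvanishing

/-! ### The generators of the flag ring -/

/-- The generators of `R(k, m)` extended by zero to a sequence indexed by `ℕ`. -/
noncomputable def xSeq (k m : ℕ) : ℕ → FlagRing k m :=
  Function.extend Fin.val (xGen k m) 0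

lemma xSeq_val {k m : ℕ} (j : Fin k) : xSeq k m j = xGen k m j :=
  Fin.val_injective.extend_apply _ _ j

lemma map_take_finRange {α : Type*} (y : ℕ → α) {r k : ℕ} (h : r ≤ k) :
    ((List.finRange k).take r).map (fun j : Fin k ↦ y j) = (List.range r).map y := by
  rw [← Function.comp_def y, ← List.map_map, List.map_take, List.map_coe_finRange_eq_range,
    List.take_range, min_eq_left h]

lemma flagRelations_xSeq (k m : ℕ) : FlagRelations (xSeq k m) k (m + k) := by
  intro r hr
  have hmem : completeHomog (((List.finRange k).take (k + 1 - (k - r))).map MvPolynomial.X)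
      (m + (k - r)) ∈ flagIdeal k m :=
    Ideal.subset_span ⟨k - r, by omega, by omega, rfl⟩
  rw [← Ideal.Quotient.eq_zero_iff_mem, map_completeHomog, List.map_map,
    show k + 1 - (k - r) = r + 1 by omega, show m + (k - r) = m + k - r by omega] at hmem
  rw [← map_take_finRange _ hr, ← hmem]
  simp only [xSeq_val]
  rfl

lemma FlagRelations.exists_algHom {S : Type*} [CommRing S] [Algebra (ZMod 2) S] {x : ℕ → S}
    {k m : ℕ} (hx : FlagRelations x k (m + k)) :
    ∃ f : FlagRing k m →ₐ[ZMod 2] S, ∀ i < k, f (xSeq k m i) = x i := by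
  let φ : MvPolynomial (Fin k) (ZMod 2) →ₐ[ZMod 2] S := MvPolynomial.aeval fun j ↦ x j
  have hφ : flagIdeal k m ≤ RingHom.ker φ := by
    refine Ideal.span_le.2 ?_
    rintro _ ⟨i, hi, hik, rfl⟩
    have hrel := hx (k - i) (by omega)
    rw [← map_take_finRange _ (show k - i + 1 ≤ k by omega), show k - i + 1 = k + 1 - i by omega,
      show m + k - (k - i) = m + i by omega] at hrel
    rw [SetLike.mem_coe, RingHom.mem_ker, ← AlgHom.coe_toRingHom, map_completeHomog, List.map_map,
      ← hrel]
    exact congrArg (completeHomog · _)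
      (List.map_congr_left fun j _ ↦ MvPolynomial.aeval_X (fun j : Fin k ↦ x j) j)
  refine ⟨Ideal.Quotient.liftₐ _ φ fun a ha ↦ hφ ha, fun i hi ↦ ?_⟩
  rw [xSeq_val ⟨i, hi⟩]
  exact MvPolynomial.aeval_X (fun j : Fin k ↦ x j) ⟨i, hi⟩

theorem staircase_xSeq_ne_zero (k m : ℕ) : staircase (xSeq k m) (m + k) k ≠ 0 := by
  obtain ⟨S, _, _, x, hx, htop⟩ :=
    exists_flagRelations_staircase_ne_zero (ZMod 2) (Nat.le_add_left k m)
  obtain ⟨f, hf⟩ := hx.exists_algHom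
  intro h
  apply htop
  rw [← staircase_congr hf, ← map_staircase, h, map_zero]

lemma zGen_eq_xSeq {k m : ℕ} (j : Fin k) :
    zGen k m j = xSeq k m j ⊗ₜ 1 + 1 ⊗ₜ xSeq k m j := by
  rw [zGen, xSeq_val]

lemma prod_filter_val_lt {M : Type*} [CommMonoid M] (f : ℕ → M) {r k : ℕ} (h : r ≤ k) :
    ∏ j ∈ univ.filter (fun j : Fin k ↦ j.val < r), f j = ∏ i ∈ range r, f i := by
  rw [prod_filter, Fin.prod_univ_eq_prod_range (fun i ↦ if i < r then f i else 1), ← prod_filter]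
  congr 1
  ext i
  simp only [mem_filter, mem_range]
  omega

/-- for `k ≥ 3` and `e ≥ 2`,
`(z_1 ⋯ z_{k-2})^{2^{e+1}-1} · z_{k-1}^{2^{e+1}-2} · z_k^{2^e-1} ≠ 0` in
`R(k, 2^e-2) ⊗ R(k, 2^e-2)`. -/
theorem statement10 (k e : ℕ) (hk : 3 ≤ k) (he : 2 ≤ e) :
    (∏ j ∈ Finset.univ.filter (fun j : Fin k => j.val < k - 2),
        zGen k (2 ^ e - 2) j) ^ (2 ^ (e + 1) - 1) *
      zGen k (2 ^ e - 2) ⟨k - 2, by omega⟩ ^ (2 ^ (e + 1) - 2) *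
      zGen k (2 ^ e - 2) ⟨k - 1, by omega⟩ ^ (2 ^ e - 1) ≠ 0 := by
  obtain ⟨p, rfl⟩ : ∃ p, k = p + 3 := ⟨k - 3, by omega⟩
  have hpow : 2 ^ 2 ≤ 2 ^ e := Nat.pow_le_pow_right two_pos he
  have hn : 2 ^ e - 2 + (p + 3) = 2 ^ e + p + 1 := by omega
  have hrel := flagRelations_xSeq (p + 3) (2 ^ e - 2)
  have htop := staircase_xSeq_ne_zero (p + 3) (2 ^ e - 2)
  rw [hn] at hrel htop
  simp only [zGen_eq_xSeq]
  rw [prod_filter_val_lt (fun i ↦ xSeq (p + 3) (2 ^ e - 2) i ⊗ₜ[ZMod 2] 1 + 1 ⊗ₜ xSeq _ _ i)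
    (by omega)]
  exact hrel.prod_tmul_add_tmul_ne_zero he htop
end

section
/- Let k, m, s be positive integers with s ≥ 2, and let 2 ≤ i ≤ s. In R(k,m)^{⊗s}, the element z_{i,1}^{m+k−1} · z_{i,2}^{m+k−2} · … · z_{i,k−1}^{m+1} · z_{i,k}^m − x_{i,1}^{m+k−1}·x_{i,2}^{m+k−2}·…·x_{i,k}^m lies in the ZMod 2-linear span of the tensor-basis elements x_1(r_1,…,r_k)·x_i(t_1,…,t_k) (products of basis monomials placed in the 1st and i-th tensor factors, with all other factors equal to 1) in which r_j > 0 for at least one j ∈ {1,…,k}. In particular this difference lies in the ideal of R(k,m)^{⊗s} generated by x_{1,1},…,x_{1,k}. -/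
/-!
Expand each factor of `∏ j, (a j + b j) ^ n j` by the binomial theorem: the product becomes a sum,
over exponent vectors `p ≤ n`, of natural multiples of `a ^ p * b ^ (n - p)`. The term `p = 0` is
`∏ j, b j ^ n j`, and every other term contains some `a j`. Since `p` and `n - p` are both bounded
by `n`, these terms are already tensor-basis elements when `n j = m + k - 1 - j`: the argument is
an identity in an arbitrary commutative ring, with no rewriting modulo the relations of `R(k,m)`.
-/

open scoped TensorProduct

section MultiBinomial

variable {ι : Type*} [Fintype ι]

lemma prod_add_pow_eq_sum_Icc {A : Type*} [CommSemiring A] [DecidableEq ι]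
    (a b : ι → A) (n : ι → ℕ) :
    ∏ j, (a j + b j) ^ n j =
      ∑ p ∈ Finset.Icc 0 n,
        (∏ j, (n j).choose (p j)) • ((∏ j, a j ^ p j) * ∏ j, b j ^ (n j - p j)) := by
  simp only [add_pow, Nat.range_succ_eq_Icc_zero, Finset.prod_univ_sum, Pi.Icc_eq,
    Pi.zero_apply, Finset.prod_mul_distrib, nsmul_eq_mul, Nat.cast_prod, mul_comm]

lemma prod_add_pow_eq_prod_pow_add_sum_Ioc {A : Type*} [CommSemiring A] [DecidableEq ι]
    (a b : ι → A) (n : ι → ℕ) :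
    ∏ j, (a j + b j) ^ n j =
      ∏ j, b j ^ n j +
        ∑ p ∈ Finset.Ioc 0 n,
          (∏ j, (n j).choose (p j)) • ((∏ j, a j ^ p j) * ∏ j, b j ^ (n j - p j)) := by
  rw [prod_add_pow_eq_sum_Icc, Finset.Icc_eq_cons_Ioc zero_le, Finset.sum_cons]
  simp

/-- The monomials `a ^ r * b ^ t` in two families of elements whose exponents are bounded by `n`
and which involve at least one `a j`. For `a = x_1`, `b = x_i` and `n j = m + k - 1 - j` these are
the tensor-basis elements `x_1(r) * x_i(t)` with `r ≠ 0`. -/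
def mixedMonomials {A : Type*} [CommMonoid A] (a b : ι → A) (n : ι → ℕ) : Set A :=
  {y | ∃ r t : ι → ℕ, (∀ j, r j ≤ n j) ∧ (∀ j, t j ≤ n j) ∧ (∃ j, 0 < r j) ∧
    y = (∏ j, a j ^ r j) * ∏ j, b j ^ t j}

lemma prod_add_pow_sub_prod_pow_mem_span (K : Type*) {A : Type*} [Semiring K] [CommRing A]
    [Module K A] (a b : ι → A) (n : ι → ℕ) :
    ∏ j, (a j + b j) ^ n j - ∏ j, b j ^ n j ∈ Submodule.span K (mixedMonomials a b n) := by
  classical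
  rw [prod_add_pow_eq_prod_pow_add_sum_Ioc, add_sub_cancel_left]
  refine sum_mem fun p hp => nsmul_mem (Submodule.subset_span ?_) _
  obtain ⟨hp_pos, hp_le⟩ := Finset.mem_Ioc.mp hp
  exact ⟨p, fun j => n j - p j, hp_le, fun j => Nat.sub_le _ _, (Pi.lt_def.mp hp_pos).2, rfl⟩

lemma mixedMonomials_subset_span_range {A : Type*} [CommSemiring A] (a b : ι → A) (n : ι → ℕ) :
    mixedMonomials a b n ⊆ Ideal.span (Set.range a) := by
  rintro _ ⟨r, t, -, -, ⟨j, hj⟩, rfl⟩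
  have haj : a j ^ r j ∈ Ideal.span (Set.range a) :=
    Ideal.pow_mem_of_mem _ (Ideal.subset_span (Set.mem_range_self j)) _ hj
  exact Ideal.mul_mem_right _ _
    (Ideal.mem_of_dvd _ (Finset.dvd_prod_of_mem _ (Finset.mem_univ j)) haj)

theorem statement14_general (K : Type*) {A : Type*} [Semiring K] [CommRing A] [Module K A]
    (a b : ι → A) (n : ι → ℕ) :
    ∏ j, (a j + b j) ^ n j - ∏ j, b j ^ n j ∈ Submodule.span K (mixedMonomials a b n) ∧
      ∏ j, (a j + b j) ^ n j - ∏ j, b j ^ n j ∈ Ideal.span (Set.range a) :=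
  ⟨prod_add_pow_sub_prod_pow_mem_span K a b n,
    Submodule.span_le.mpr (mixedMonomials_subset_span_range a b n)
      (prod_add_pow_sub_prod_pow_mem_span A a b n)⟩

end MultiBinomial

/-- for `2 ≤ i ≤ s`, the element
`z_{i,1}^{m+k-1} z_{i,2}^{m+k-2} ⋯ z_{i,k}^m − x_{i,1}^{m+k-1} ⋯ x_{i,k}^m` of
`R(k,m)^{⊗s}` lies in the `ZMod 2`-linear span of the tensor-basis elements
`x_1(r_1,…,r_k) · x_i(t_1,…,t_k)` with `r_j > 0` for some `j`; in particular it lies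
in the ideal generated by `x_{1,1}, …, x_{1,k}`. -/
theorem statement14 (k m s : ℕ) (hk : 0 < k) (hm : 0 < m) (hs : 2 ≤ s)
    (i : Fin s) (hi : 0 < i.val) :
    ((∏ j : Fin k, zT k m s (by omega) i j ^ (m + k - 1 - j.val)) -
        (∏ j : Fin k, xT k m s i j ^ (m + k - 1 - j.val)) ∈
      Submodule.span (ZMod 2)
        { y : ⨂[ZMod 2] _ : Fin s, FlagRing k m | ∃ r t : Fin k → ℕ,
            (∀ j : Fin k, r j + j.val < m + k) ∧
            (∀ j : Fin k, t j + j.val < m + k) ∧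
            (∃ j : Fin k, 0 < r j) ∧
            y = (∏ j : Fin k, xT k m s ⟨0, by omega⟩ j ^ r j) *
                (∏ j : Fin k, xT k m s i j ^ t j) }) ∧
    ((∏ j : Fin k, zT k m s (by omega) i j ^ (m + k - 1 - j.val)) -
        (∏ j : Fin k, xT k m s i j ^ (m + k - 1 - j.val)) ∈
      Ideal.span (Set.range (xT k m s ⟨0, by omega⟩))) := by
  have lt_iff (e : ℕ) (j : Fin k) : e + j.val < m + k ↔ e ≤ m + k - 1 - j.val := by omega
  simpa only [lt_iff, zT, mixedMonomials] using
    statement14_general (ZMod 2) (xT k m s ⟨0, by omega⟩) (xT k m s i) _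
end
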